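/- Let n ≥ 1, 1 < p < ∞ and 0 < s < 1. There exists a constant C = C(n,p) > 0, depending only on n and p, such that for every f ∈ C_c^∞(ℍⁿ₊), (C/s) · ∫_{ℍⁿ₊} |f(ξ)|^p / x₁^{sp} dξ ≤ ∫_{ℍⁿ} ∫_{ℍⁿ} |f(ξ)−f(ξ')|^p / d(ξ⁻¹∘ξ')^{Q+sp} dξ' dξ. -/

import Mathlib

/-!
Since `f` vanishes outside the half-space, only the pairs `(ξ, ξ')` with `x₁(ξ) > 0 ≥ x₁(ξ')` are
needed: on them the numerator of the kernel is `|f ξ|^p`. By left invariance of Lebesgue measure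
(`measurePreserving_Hmul`) the inner integral is then at least
`|f ξ|^p ∫_{x₁(η) ≤ -a} d(η)^{-(Q+sp)} dη` with `a = x₁(ξ)`. The domain `x₁(η) ≤ -a` contains the
disjoint boxes `hbox n (2^k a)`, `k ≥ 0`. The box of scale `r` has volume `r^Q` and lies in
`d ≤ K r` for a constant `K = K(n)`, so it contributes at least `K^{-(Q+sp)} r^{-sp}`. Summing the
geometric series over `r = 2^k a` gives `K^{-(Q+sp)} a^{-sp} / (1 - 2^{-sp})`, and
`1 - 2^{-sp} ≤ sp` yields the factor `1 / s` with a constant depending only on `n` and `p`.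
-/

open MeasureTheory Real Filter Topology ENNReal

noncomputable section

/-- The Heisenberg group `ℍⁿ` as `ℝⁿ × ℝⁿ × ℝ`. -/
abbrev Heis (n : ℕ) : Type := (Fin n → ℝ) × (Fin n → ℝ) × ℝ

/-- Group law `ξ ∘ ξ' = (x+x', y+y', t+t'+2⟨y,x'⟩−2⟨x,y'⟩)`. -/
def Hmul {n : ℕ} (a b : Heis n) : Heis n :=
  (a.1 + b.1, a.2.1 + b.2.1,
    a.2.2 + b.2.2 + 2 * (∑ i, a.2.1 i * b.1 i) - 2 * (∑ i, a.1 i * b.2.1 i))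

/-- Group inverse `ξ⁻¹ = −ξ`. -/
def Hinv {n : ℕ} (a : Heis n) : Heis n := (-a.1, -a.2.1, -a.2.2)

/-- Squared Euclidean norm of the horizontal part `z = (x,y) ∈ ℝ^{2n}`. -/
def zsq {n : ℕ} (a : Heis n) : ℝ := (∑ i, (a.1 i) ^ 2) + (∑ i, (a.2.1 i) ^ 2)

/-- Euclidean norm `|z|` of the horizontal part. -/
def znorm {n : ℕ} (a : Heis n) : ℝ := Real.sqrt (zsq a)

/-- The Koranyi–Folland gauge `d(ξ) = (|z|⁴ + t²)^{1/4}`. -/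
def hd {n : ℕ} (a : Heis n) : ℝ := ((zsq a) ^ 2 + (a.2.2) ^ 2) ^ ((1 : ℝ) / 4)

/-- Homogeneous dimension `Q = 2n + 2` (as a real number). -/
def hQ (n : ℕ) : ℝ := 2 * n + 2

/-- First coordinate `x₁` of a point of `ℍⁿ`. -/
def x1 {n : ℕ} (a : Heis n) : ℝ := if h : 0 < n then a.1 ⟨0, h⟩ else 0

/-- The half-space `ℍⁿ₊ = {ξ : x₁ > 0}`. -/
def halfSpace (n : ℕ) : Set (Heis n) := {a | 0 < x1 a}

/-- Euclidean distance `|z - z'|` of the horizontal parts. -/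
def zdist {n : ℕ} (a b : Heis n) : ℝ := znorm (Hmul (Hinv a) b)

/-- `J_p(t) = |t|^{p-2} t`. -/
def Jp (p t : ℝ) : ℝ := |t| ^ (p - 2) * t

/-- The Gagliardo-type seminorm (to the `p`-th power)
`[f]_{s,p,α,Ω}^p = ∫_Ω ∫_Ω |f(ξ)-f(ξ')|^p / (d(ξ⁻¹∘ξ')^{Q+sp} |z-z'|^α)`. -/
def gagSem {n : ℕ} (p s α : ℝ) (Ω : Set (Heis n)) (f : Heis n → ℝ) : ℝ≥0∞ :=
  ∫⁻ ξ in Ω, ∫⁻ ξ' in Ω, ENNReal.ofReal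
    (|f ξ - f ξ'| ^ p / (hd (Hmul (Hinv ξ) ξ') ^ (hQ n + s * p) * zdist ξ ξ' ^ α))

/-- The seminorm for `α = 0` (no horizontal weight). -/
def gagSem0 {n : ℕ} (p s : ℝ) (Ω : Set (Heis n)) (f : Heis n → ℝ) : ℝ≥0∞ :=
  ∫⁻ ξ in Ω, ∫⁻ ξ' in Ω, ENNReal.ofReal
    (|f ξ - f ξ'| ^ p / hd (Hmul (Hinv ξ) ξ') ^ (hQ n + s * p))

/-- The strip `𝒟_{r,R} = {ξ : r < x₁ < R}`. -/
def strip (n : ℕ) (r R : ℝ) : Set (Heis n) := {ξ | r < x1 ξ ∧ x1 ξ < R}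

/-- `f ∈ W^{s,p,α}_{loc(x₁)}(ℍⁿ₊)`. -/
def MemWlocx1 (n : ℕ) (p s α : ℝ) (f : Heis n → ℝ) : Prop :=
  Measurable f ∧ ∀ r R : ℝ, 0 < r → r < R →
    (∫⁻ ξ in strip n r R, ENNReal.ofReal (|f ξ| ^ p)) < ⊤ ∧
    gagSem p s α (strip n r R) f < ⊤

/-- `f ∈ L^{p-1}_{sp,α}(ℍⁿ)`. -/
def MemLsp (n : ℕ) (p s α : ℝ) (f : Heis n → ℝ) : Prop :=
  Measurable f ∧
  (∀ K : Set (Heis n), IsCompact K →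
    (∫⁻ ξ in K, ENNReal.ofReal (|f ξ| ^ (p - 1))) < ⊤) ∧
  (∫⁻ ξ, ENNReal.ofReal (|f ξ| ^ (p - 1) /
      ((1 + hd ξ) ^ (hQ n + s * p) * (1 + znorm ξ) ^ α))) < ⊤

/-- `φ ∈ W^{s,p,α}(Ω)`. -/
def MemW (n : ℕ) (p s α : ℝ) (Ω : Set (Heis n)) (φ : Heis n → ℝ) : Prop :=
  Measurable φ ∧ (∫⁻ ξ in Ω, ENNReal.ofReal (|φ ξ| ^ p)) < ⊤ ∧ gagSem p s α Ω φ < ⊤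

/-- `φ ∈ W^{s,p}(Ω)` (the case `α = 0`). -/
def MemW0 (n : ℕ) (p s : ℝ) (Ω : Set (Heis n)) (φ : Heis n → ℝ) : Prop :=
  Measurable φ ∧ (∫⁻ ξ in Ω, ENNReal.ofReal (|φ ξ| ^ p)) < ⊤ ∧ gagSem0 p s Ω φ < ⊤

/-- `f ∈ W^{s,p}_{loc}(ℍⁿ₊)`. -/
def MemWloc0 (n : ℕ) (p s : ℝ) (f : Heis n → ℝ) : Prop :=
  Measurable f ∧ ∀ K : Set (Heis n), IsCompact K → K ⊆ halfSpace n →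
    (∫⁻ ξ in K, ENNReal.ofReal (|f ξ| ^ p)) < ⊤ ∧ gagSem0 p s K f < ⊤

/-- `f ∈ L^{p-1}_{sp}(ℍⁿ)`. -/
def MemLsp0 (n : ℕ) (p s : ℝ) (f : Heis n → ℝ) : Prop :=
  Measurable f ∧
  (∀ K : Set (Heis n), IsCompact K →
    (∫⁻ ξ in K, ENNReal.ofReal (|f ξ| ^ (p - 1))) < ⊤) ∧
  (∫⁻ ξ, ENNReal.ofReal (|f ξ| ^ (p - 1) / (1 + hd ξ) ^ (hQ n + s * p))) < ⊤

/-- Surface measure of the unit sphere `S^{m-1} ⊂ ℝ^m`: `|S^{m-1}| = 2π^{m/2}/Γ(m/2)`. -/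
def sphereArea (m : ℕ) : ℝ := 2 * Real.pi ^ ((m : ℝ) / 2) / Real.Gamma ((m : ℝ) / 2)

/-- `ℐ(k,θ,α) = (∫₀^∞ (1+t²)^{-(k+2+θ)/4} dt) (∫₀^∞ r^{k-2}(1+r²)^{-(k+θ+α)/2} dr)`. -/
def calI (k : ℕ) (θ α : ℝ) : ℝ :=
  (∫ t in Set.Ioi (0 : ℝ), (1 + t ^ 2) ^ (-(((k : ℝ) + 2 + θ) / 4))) *
  (∫ r in Set.Ioi (0 : ℝ), r ^ ((k : ℝ) - 2) * (1 + r ^ 2) ^ (-(((k : ℝ) + θ + α) / 2)))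

/-- `Λ_{s,p,α} = 2∫₀¹ |1-τ^{(sp+α-1)/p}|^p/(1-τ)^{1+sp+α} dτ + 2/(sp+α)`. -/
def LamC (s p α : ℝ) : ℝ :=
  2 * (∫ τ in Set.Ioo (0 : ℝ) 1,
      |1 - τ ^ ((s * p + α - 1) / p)| ^ p / (1 - τ) ^ (1 + s * p + α)) + 2 / (s * p + α)

/-- `u_β(τ) = τ^β` for `τ > 0`, extended by `0`. -/
def ubeta (β τ : ℝ) : ℝ := if 0 < τ then τ ^ β else 0

/-- `λ(β,s,p)`. -/
def lam (p s β : ℝ) : ℝ :=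
  2 * (∫ τ in Set.Ioo (0 : ℝ) 1,
      Jp p (1 - τ ^ β) * (1 - τ ^ (s * p - 1 - β * (p - 1))) / (1 - τ) ^ (1 + s * p)) +
  2 / (s * p)

/-- `λ_ε(β,s,p)`. -/
def lamEps (p s β ε : ℝ) : ℝ :=
  2 * (∫ τ in Set.Ioo (0 : ℝ) (1 / (1 + ε)), Jp p (1 - τ ^ β) / |1 - τ| ^ (1 + s * p)) +
  2 * (∫ τ in Set.Ioi (1 + ε), Jp p (1 - τ ^ β) / |1 - τ| ^ (1 + s * p)) +
  2 / (s * p)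

/-- The box `D_{R₀}`. -/
def boxD (n : ℕ) (R₀ : ℝ) : Set (Heis n) :=
  {ξ | (∀ i, |ξ.1 i| ≤ R₀) ∧ (∀ i, |ξ.2.1 i| ≤ R₀) ∧ |ξ.2.2| ≤ R₀ ^ 2}

/-- The box `D_{R₀,t}`. -/
def boxDt (n : ℕ) (R₀ : ℝ) : Set (Heis n) :=
  {ξ | (∀ i, |ξ.1 i| ≤ R₀) ∧ (∀ i, |ξ.2.1 i| ≤ R₀) ∧ |ξ.2.2| ≤ R₀ ^ 2 + R₀}

/-! ### Dyadic boxes and the gauge -/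

/-- The box `{-2r ≤ xᵢ < -r, 0 ≤ yᵢ < r, 0 ≤ t < r²}`, the image of `hbox n 1` under the Heisenberg
dilation of ratio `r`. -/
def hbox (n : ℕ) (r : ℝ) : Set (Heis n) :=
  (Set.univ.pi fun _ => Set.Ico (-(2 * r)) (-r)) ×ˢ
    ((Set.univ.pi fun _ => Set.Ico 0 r) ×ˢ Set.Ico 0 (r ^ 2))

/-- The constant `K` for which `hbox n r` lies in the gauge ball of radius `K r`. -/
def hK (n : ℕ) : ℝ := (25 * (n : ℝ) ^ 2 + 1) ^ ((1 : ℝ) / 4)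

lemma one_le_hK (n : ℕ) : 1 ≤ hK n := by
  unfold hK
  apply Real.one_le_rpow
  · nlinarith [sq_nonneg (n : ℝ)]
  · norm_num

lemma measurableSet_hbox (n : ℕ) (r : ℝ) : MeasurableSet (hbox n r) :=
  (MeasurableSet.univ_pi fun _ => measurableSet_Ico).prod
    ((MeasurableSet.univ_pi fun _ => measurableSet_Ico).prod measurableSet_Ico)

lemma volume_hbox (n : ℕ) {r : ℝ} (hr : 0 < r) :
    volume (hbox n r) = ENNReal.ofReal (r ^ hQ n) := by
  have h1 : -r - -(2 * r) = r := by ring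
  have h2 : r ^ hQ n = r ^ n * (r ^ n * r ^ 2) := by
    have : hQ n = ((n + (n + 2) : ℕ) : ℝ) := by unfold hQ; push_cast; ring
    rw [this, Real.rpow_natCast, pow_add, pow_add]
  rw [hbox, Measure.volume_eq_prod, Measure.prod_prod, Measure.volume_eq_prod, Measure.prod_prod,
    volume_pi_pi, volume_pi_pi, h2, ENNReal.ofReal_mul (by positivity),
    ENNReal.ofReal_mul (by positivity)]
  simp [Real.volume_Ico, h1, ENNReal.ofReal_pow hr.le]

lemma x1_eq {n : ℕ} (hn : 0 < n) (a : Heis n) : x1 a = a.1 ⟨0, hn⟩ := by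
  simp [x1, hn]

lemma measurable_x1 (n : ℕ) : Measurable (x1 : Heis n → ℝ) := by
  by_cases hn : 0 < n
  · simp only [funext (x1_eq hn)]
    fun_prop
  · have : (x1 : Heis n → ℝ) = fun _ => 0 := by funext a; simp [x1, hn]
    rw [this]
    exact measurable_const

lemma measurable_hd (n : ℕ) : Measurable (hd : Heis n → ℝ) := by
  unfold hd zsq
  fun_prop

lemma x1_Hmul_Hinv {n : ℕ} (a b : Heis n) : x1 (Hmul (Hinv a) b) = x1 b - x1 a := by
  by_cases hn : 0 < n
  · simp only [x1_eq hn, Hmul, Hinv, Pi.add_apply, Pi.neg_apply]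
    ring
  · simp [x1, hn]

lemma x1_mem_of_mem_hbox {n : ℕ} (hn : 0 < n) {r : ℝ} {η : Heis n} (h : η ∈ hbox n r) :
    -(2 * r) ≤ x1 η ∧ x1 η < -r := by
  rw [x1_eq hn]
  exact h.1 ⟨0, hn⟩ trivial

lemma hd_pos_of_mem_hbox {n : ℕ} (hn : 0 < n) {r : ℝ} (hr : 0 < r) {η : Heis n}
    (h : η ∈ hbox n r) : 0 < hd η := by
  have h1 : η.1 ⟨0, hn⟩ < -r := (h.1 ⟨0, hn⟩ trivial).2
  have h2 : 0 < (η.1 ⟨0, hn⟩) ^ 2 := by nlinarith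
  have h3 : (η.1 ⟨0, hn⟩) ^ 2 ≤ ∑ i, (η.1 i) ^ 2 :=
    Finset.single_le_sum (f := fun i => (η.1 i) ^ 2) (fun i _ => sq_nonneg _) (Finset.mem_univ _)
  have h4 : 0 ≤ ∑ i, (η.2.1 i) ^ 2 := Finset.sum_nonneg fun i _ => sq_nonneg _
  have h5 : 0 < zsq η := by unfold zsq; linarith
  unfold hd
  positivity

lemma hd_le_of_mem_hbox {n : ℕ} {r : ℝ} (hr : 0 < r) {η : Heis n} (h : η ∈ hbox n r) :
    hd η ≤ hK n * r := by
  have h1 : ∑ i, (η.1 i) ^ 2 ≤ n * (4 * r ^ 2) := by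
    calc ∑ i, (η.1 i) ^ 2 ≤ ∑ _i : Fin n, 4 * r ^ 2 := by
          refine Finset.sum_le_sum fun i _ => ?_
          have := h.1 i trivial
          simp only [Set.mem_Ico] at this
          nlinarith
      _ = n * (4 * r ^ 2) := by simp
  have h2 : ∑ i, (η.2.1 i) ^ 2 ≤ n * r ^ 2 := by
    calc ∑ i, (η.2.1 i) ^ 2 ≤ ∑ _i : Fin n, r ^ 2 := by
          refine Finset.sum_le_sum fun i _ => ?_
          have := h.2.1 i trivial
          simp only [Set.mem_Ico] at this
          nlinarith
      _ = n * r ^ 2 := by simp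
  have h3 : 0 ≤ zsq η := by unfold zsq; positivity
  have h4 : zsq η ≤ 5 * n * r ^ 2 := by unfold zsq; linarith
  have h5 : (zsq η) ^ 2 ≤ (5 * n * r ^ 2) ^ 2 := pow_le_pow_left₀ h3 h4 2
  have h6 : η.2.2 ^ 2 ≤ (r ^ 2) ^ 2 := pow_le_pow_left₀ h.2.2.1 h.2.2.2.le 2
  have h7 : r = (r ^ 4) ^ ((1 : ℝ) / 4) := by
    rw [← Real.rpow_natCast, ← Real.rpow_mul hr.le]
    norm_num
  calc hd η ≤ ((25 * (n : ℝ) ^ 2 + 1) * r ^ 4) ^ ((1 : ℝ) / 4) := by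
        unfold hd
        apply Real.rpow_le_rpow (by positivity) _ (by norm_num)
        nlinarith
    _ = hK n * r := by
        rw [Real.mul_rpow (by positivity) (by positivity), ← h7, hK]

/-! ### Left invariance of Lebesgue measure -/

/-- Lebesgue measure is left invariant on the Heisenberg group: a left translation is a Euclidean
translation composed with shears in the `t` direction. -/
lemma measurePreserving_Hmul {n : ℕ} (a : Heis n) :
    MeasurePreserving (Hmul a) (volume : Measure (Heis n)) volume := by
  have inner : ∀ x : Fin n → ℝ, MeasurePreserving
      (fun q : (Fin n → ℝ) × ℝ => (a.2.1 + q.1,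
        a.2.2 + q.2 + 2 * (∑ i, a.2.1 i * x i) - 2 * (∑ i, a.1 i * q.1 i))) volume volume := by
    intro x
    refine MeasurePreserving.skew_product
      (g := fun (y : Fin n → ℝ) (t : ℝ) =>
        a.2.2 + t + 2 * (∑ i, a.2.1 i * x i) - 2 * (∑ i, a.1 i * y i))
      (measurePreserving_add_left volume a.2.1) (by fun_prop) (ae_of_all _ fun y => ?_)
    have : (fun t : ℝ => a.2.2 + t + 2 * (∑ i, a.2.1 i * x i) - 2 * (∑ i, a.1 i * y i)) =
        fun t => (a.2.2 + 2 * (∑ i, a.2.1 i * x i) - 2 * (∑ i, a.1 i * y i)) + t := by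
      funext t; ring
    rw [this]
    exact (measurePreserving_add_left volume _).map_eq
  exact MeasurePreserving.skew_product
    (g := fun (x : Fin n → ℝ) (q : (Fin n → ℝ) × ℝ) => (a.2.1 + q.1,
        a.2.2 + q.2 + 2 * (∑ i, a.2.1 i * x i) - 2 * (∑ i, a.1 i * q.1 i)))
    (measurePreserving_add_left volume a.1) (by fun_prop) (ae_of_all _ fun x => (inner x).map_eq)

/-! ### The kernel on the half-space `x₁ ≤ -a` -/

/-- The box of scale `r` contributes at least `K^{-(Q+σ)} r^{-σ}` to the integral of
`d^{-(Q+σ)}`. -/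
lemma le_setLIntegral_hbox {n : ℕ} (hn : 0 < n) {r σ : ℝ} (hr : 0 < r) (hσ : 0 < σ) :
    ENNReal.ofReal ((hK n ^ (hQ n + σ))⁻¹ * r ^ (-σ)) ≤
      ∫⁻ η in hbox n r, ENNReal.ofReal ((hd η ^ (hQ n + σ))⁻¹) := by
  have hK0 : 0 < hK n := one_pos.trans_le (one_le_hK n)
  have hQ0 : 0 < hQ n := by unfold hQ; positivity
  calc ENNReal.ofReal ((hK n ^ (hQ n + σ))⁻¹ * r ^ (-σ))
      = ENNReal.ofReal (((hK n * r) ^ (hQ n + σ))⁻¹) * volume (hbox n r) := by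
        rw [volume_hbox n hr, ← ENNReal.ofReal_mul (by positivity),
          Real.mul_rpow hK0.le hr.le, Real.rpow_add hr, Real.rpow_neg hr.le]
        congr 1
        have := Real.rpow_pos_of_pos hr (hQ n)
        field_simp
    _ = ∫⁻ _η in hbox n r, ENNReal.ofReal (((hK n * r) ^ (hQ n + σ))⁻¹) := by
        rw [setLIntegral_const]
    _ ≤ _ := by
        refine setLIntegral_mono' (measurableSet_hbox n r) fun η hη => ?_
        apply ENNReal.ofReal_le_ofReal
        have h0 := hd_pos_of_mem_hbox hn hr hη
        have h1 := hd_le_of_mem_hbox hr hη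
        gcongr

/-- The geometric series `∑ (2^k a)^{-σ}` is at least `a^{-σ} / σ`, because
`1 - 2^{-σ} ≤ σ log 2 ≤ σ`. -/
lemma le_tsum_dyadic {a σ : ℝ} (ha : 0 < a) (hσ : 0 < σ) :
    Summable (fun k : ℕ => ((2 : ℝ) ^ k * a) ^ (-σ)) ∧
      a ^ (-σ) / σ ≤ ∑' k : ℕ, ((2 : ℝ) ^ k * a) ^ (-σ) := by
  set q : ℝ := (2 : ℝ) ^ (-σ) with hq
  have hq0 : 0 < q := by positivity
  have hq1 : q < 1 := Real.rpow_lt_one_of_one_lt_of_neg (by norm_num) (by linarith)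
  have hterm : ∀ k : ℕ, ((2 : ℝ) ^ k * a) ^ (-σ) = q ^ k * a ^ (-σ) := by
    intro k
    rw [Real.mul_rpow (by positivity) ha.le, hq, ← Real.rpow_natCast, ← Real.rpow_natCast,
      ← Real.rpow_mul (by norm_num), ← Real.rpow_mul (by norm_num), mul_comm (k : ℝ)]
  have hq2 : 1 - q ≤ σ := by
    have h1 : Real.log 2 * (-σ) + 1 ≤ q := by
      rw [hq, Real.rpow_def_of_pos (by norm_num)]
      exact Real.add_one_le_exp _
    have h2 : Real.log 2 ≤ 1 := by linarith [Real.log_two_lt_d9]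
    nlinarith
  simp only [hterm]
  refine ⟨(summable_geometric_of_lt_one hq0.le hq1).mul_right _, ?_⟩
  rw [tsum_mul_right, tsum_geometric_of_lt_one hq0.le hq1, div_eq_inv_mul]
  have h3 : 0 < 1 - q := by linarith
  gcongr

/-- Lower bound, uniform as `σ → 0` up to the factor `1 / σ`, for the mass of `d^{-(Q+σ)}` in
`x₁ ≤ -a`. -/
lemma le_setLIntegral_x1_le {n : ℕ} (hn : 0 < n) {a σ : ℝ} (ha : 0 < a) (hσ : 0 < σ) :
    ENNReal.ofReal ((hK n ^ (hQ n + σ))⁻¹ * (a ^ (-σ) / σ)) ≤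
      ∫⁻ η in {η : Heis n | x1 η ≤ -a}, ENNReal.ofReal ((hd η ^ (hQ n + σ))⁻¹) := by
  have hK0 : 0 < hK n := one_pos.trans_le (one_le_hK n)
  obtain ⟨hsum, hle⟩ := le_tsum_dyadic ha hσ
  have hr : ∀ k : ℕ, 0 < (2 : ℝ) ^ k * a := fun k => by positivity
  have hdisj : Pairwise (Function.onFun Disjoint fun k : ℕ => hbox n ((2 : ℝ) ^ k * a)) := by
    have key : ∀ j k : ℕ, j < k →
        Disjoint (hbox n ((2 : ℝ) ^ j * a)) (hbox n ((2 : ℝ) ^ k * a)) := by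
      intro j k hjk
      rw [Set.disjoint_left]
      intro η h1 h2
      have h3 := (x1_mem_of_mem_hbox hn h1).1
      have h4 := (x1_mem_of_mem_hbox hn h2).2
      have h5 : (2 : ℝ) ^ (j + 1) ≤ 2 ^ k := pow_le_pow_right₀ (by norm_num) hjk
      have h6 : (2 : ℝ) ^ (j + 1) * a ≤ 2 ^ k * a := by gcongr
      rw [pow_succ] at h6
      linarith
    intro j k hjk
    rcases lt_or_gt_of_ne hjk with h | h
    · exact key j k h
    · exact (key k j h).symm
  have hsub : (⋃ k : ℕ, hbox n ((2 : ℝ) ^ k * a)) ⊆ {η : Heis n | x1 η ≤ -a} := by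
    intro η hη
    obtain ⟨k, hk⟩ := Set.mem_iUnion.1 hη
    have h1 := (x1_mem_of_mem_hbox hn hk).2
    have h2 : (1 : ℝ) ≤ 2 ^ k := one_le_pow₀ (by norm_num)
    have h3 : 1 * a ≤ 2 ^ k * a := by gcongr
    show x1 η ≤ -a
    linarith
  calc ENNReal.ofReal ((hK n ^ (hQ n + σ))⁻¹ * (a ^ (-σ) / σ))
      ≤ ENNReal.ofReal (∑' k : ℕ, (hK n ^ (hQ n + σ))⁻¹ * ((2 : ℝ) ^ k * a) ^ (-σ)) := by
        rw [tsum_mul_left]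
        gcongr
    _ = ∑' k : ℕ, ENNReal.ofReal ((hK n ^ (hQ n + σ))⁻¹ * ((2 : ℝ) ^ k * a) ^ (-σ)) :=
        ENNReal.ofReal_tsum_of_nonneg (fun k => by have := hr k; positivity) (hsum.mul_left _)
    _ ≤ ∑' k : ℕ, ∫⁻ η in hbox n ((2 : ℝ) ^ k * a), ENNReal.ofReal ((hd η ^ (hQ n + σ))⁻¹) :=
        ENNReal.tsum_le_tsum fun k => le_setLIntegral_hbox hn (hr k) hσ
    _ = ∫⁻ η in ⋃ k : ℕ, hbox n ((2 : ℝ) ^ k * a), ENNReal.ofReal ((hd η ^ (hQ n + σ))⁻¹) :=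
        (lintegral_iUnion (fun k => measurableSet_hbox n _) hdisj _).symm
    _ ≤ _ := lintegral_mono_set hsub

/-! ### The Hardy inequality -/

/-- intermediate Hardy-type estimate with constant `C(n,p)/s`
which does not degenerate as `s → 0`. -/
theorem fractional_hardy_halfspace_small_s (n : ℕ) (hn : 1 ≤ n) (p : ℝ) (hp1 : 1 < p) :
    ∃ C : ℝ, 0 < C ∧ ∀ s : ℝ, 0 < s → s < 1 →
      ∀ f : Heis n → ℝ, ContDiff ℝ (⊤ : ℕ∞) f → HasCompactSupport f →
        tsupport f ⊆ halfSpace n →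
        ENNReal.ofReal (C / s) *
            (∫⁻ ξ in halfSpace n, ENNReal.ofReal (|f ξ| ^ p / x1 ξ ^ (s * p))) ≤
          ∫⁻ ξ, ∫⁻ ξ', ENNReal.ofReal
            (|f ξ - f ξ'| ^ p / hd (Hmul (Hinv ξ) ξ') ^ (hQ n + s * p)) := by
  have hn0 : 0 < n := hn
  have hp0 : 0 < p := by linarith
  have hK1 := one_le_hK n
  have hK0 : 0 < hK n := one_pos.trans_le hK1
  refine ⟨(hK n ^ (hQ n + p))⁻¹ / p, by positivity, ?_⟩
  intro s hs0 hs1 f _ _ hf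
  have hσ : 0 < s * p := by positivity
  have hfzero : ∀ ξ : Heis n, x1 ξ ≤ 0 → f ξ = 0 := by
    intro ξ hξ
    apply image_eq_zero_of_notMem_tsupport
    intro h
    exact absurd (hf h) (not_lt.2 hξ)
  rw [← lintegral_const_mul' _ _ ENNReal.ofReal_ne_top]
  refine le_trans ?_ (setLIntegral_le_lintegral (halfSpace n) _)
  refine setLIntegral_mono' (measurableSet_lt measurable_const (measurable_x1 n)) fun ξ hξ => ?_
  have ha : 0 < x1 ξ := hξ
  set S : Set (Heis n) := {η | x1 η ≤ -x1 ξ} with hS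
  have hSm : MeasurableSet S := measurableSet_le (measurable_x1 n) measurable_const
  have hGm : Measurable fun η : Heis n => ENNReal.ofReal ((hd η ^ (hQ n + s * p))⁻¹) :=
    (((measurable_hd n).pow_const _).inv).ennreal_ofReal
  have hfp : 0 ≤ |f ξ| ^ p := by positivity
  calc ENNReal.ofReal ((hK n ^ (hQ n + p))⁻¹ / p / s) *
        ENNReal.ofReal (|f ξ| ^ p / x1 ξ ^ (s * p))
      ≤ ENNReal.ofReal (|f ξ| ^ p) *
          ENNReal.ofReal ((hK n ^ (hQ n + s * p))⁻¹ * (x1 ξ ^ (-(s * p)) / (s * p))) := by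
        rw [← ENNReal.ofReal_mul (by positivity), ← ENNReal.ofReal_mul (by positivity)]
        apply ENNReal.ofReal_le_ofReal
        have h1 : (hK n ^ (hQ n + p))⁻¹ ≤ (hK n ^ (hQ n + s * p))⁻¹ := by
          gcongr
          nlinarith
        rw [Real.rpow_neg ha.le]
        have h2 : 0 ≤ |f ξ| ^ p * ((x1 ξ ^ (s * p))⁻¹ / (s * p)) := by positivity
        calc (hK n ^ (hQ n + p))⁻¹ / p / s * (|f ξ| ^ p / x1 ξ ^ (s * p))
            = (hK n ^ (hQ n + p))⁻¹ * (|f ξ| ^ p * ((x1 ξ ^ (s * p))⁻¹ / (s * p))) := by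
              field_simp
          _ ≤ (hK n ^ (hQ n + s * p))⁻¹ * (|f ξ| ^ p * ((x1 ξ ^ (s * p))⁻¹ / (s * p))) :=
              mul_le_mul_of_nonneg_right h1 h2
          _ = _ := by ring
    _ ≤ ENNReal.ofReal (|f ξ| ^ p) *
          ∫⁻ η in S, ENNReal.ofReal ((hd η ^ (hQ n + s * p))⁻¹) := by
        gcongr
        exact le_setLIntegral_x1_le hn0 ha hσ
    _ = ENNReal.ofReal (|f ξ| ^ p) * ∫⁻ ξ', S.indicator
          (fun η => ENNReal.ofReal ((hd η ^ (hQ n + s * p))⁻¹)) (Hmul (Hinv ξ) ξ') := by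
        rw [(measurePreserving_Hmul (Hinv ξ)).lintegral_comp (hGm.indicator hSm),
          lintegral_indicator hSm]
    _ = ∫⁻ ξ', ENNReal.ofReal (|f ξ| ^ p) * S.indicator
          (fun η => ENNReal.ofReal ((hd η ^ (hQ n + s * p))⁻¹)) (Hmul (Hinv ξ) ξ') :=
        (lintegral_const_mul' _ _ ENNReal.ofReal_ne_top).symm
    _ ≤ _ := by
        refine lintegral_mono fun ξ' => ?_
        by_cases h : Hmul (Hinv ξ) ξ' ∈ S
        · have h1 : x1 ξ' ≤ 0 := by
            have h2 : x1 (Hmul (Hinv ξ) ξ') ≤ -x1 ξ := h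
            rw [x1_Hmul_Hinv] at h2
            linarith
          rw [Set.indicator_of_mem h, ← ENNReal.ofReal_mul hfp, hfzero ξ' h1, sub_zero,
            div_eq_mul_inv]
        · rw [Set.indicator_of_notMem h, mul_zero]
          exact zero_le
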